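/- Define β₀*(π, m, δ) := (1/2)·(g₁⁻¹(ρ*/(2(1−π)mδ)) − g₁⁻¹(ρ*/(2πmδ))), where ρ* = ρ*(π,m,δ) is the unique ρ ∈ (0,1) satisfying π·δ·g(ρ/(2πmδ)) + (1−π)·δ·g(ρ/(2(1−π)mδ)) = 1 − ρ². Then for all π ∈ (0,1/2), m > 0, δ > 0: β₀*(π,m,δ) < 0; moreover β₀* is strictly increasing in π on (0,1/2) (for fixed m, δ), strictly increasing in m on (0,∞) (for fixed π ∈ (0,1/2), δ), and strictly increasing in δ on (0,∞) (for fixed π ∈ (0,1/2), m). -/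

import Mathlib

open MeasureTheory

/-- The standard normal density. -/
noncomputable def normPDF (x : ℝ) : ℝ := Real.exp (-x ^ 2 / 2) / Real.sqrt (2 * Real.pi)

/-- The standard normal cumulative distribution function. -/
noncomputable def normCDF (x : ℝ) : ℝ := ∫ t in Set.Iic x, normPDF t

/-- `g₁(x) = x·Φ(x) + φ(x)`, equal to `E[(Z+x)₊]` for standard normal `Z`. -/
noncomputable def g1 (x : ℝ) : ℝ := x * normCDF x + normPDF x

/-- `g₂(x) = (x²+1)·Φ(x) + x·φ(x)`, equal to `E[(Z+x)₊²]` for standard normal `Z`. -/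
noncomputable def g2 (x : ℝ) : ℝ := (x ^ 2 + 1) * normCDF x + x * normPDF x

/-- The inverse of `g₁` (on its range `(0,∞)`). -/
noncomputable def g1inv : ℝ → ℝ := Function.invFun g1

/-- `g = g₂ ∘ g₁⁻¹`. -/
noncomputable def gfn (t : ℝ) : ℝ := g2 (g1inv t)

open Filter Set ProbabilityTheory
open scoped Topology

/-!
With `u = g₁⁻¹(ρ/(2πmδ))` and `v = g₁⁻¹(ρ/(2(1-π)mδ))`, the intercept is `(v - u)/2`, and
eliminating `ρ` leaves the balance `π g₁(u) = (1-π) g₁(v)` and one normalization.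

For fixed `π`, everything in the normalization increases with `u`, `v`, `m` and `δ`, so raising
`m` or `δ` lowers `u`. Since `g₁` is strictly log-concave and the ratio `g₁(v)/g₁(u)` is fixed,
lowering `u` narrows the gap `u - v`.

For fixed `m` and `δ`, eliminating `π` as well turns the normalization into a symmetric equation
in `(u, v)`. Strict log-concavity of `g₂` makes it strictly increasing in both variables, so `u`
and `v` move in opposite directions, and the balance decides which of them goes up with `π`.

Log-concavity of `g₁` and `g₂` is inherited along the chain of antiderivatives `φ, Φ, g₁, g₂/2`
by the monotone form of L'Hôpital's rule.
-/

section MonotoneLHopital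

lemma lt_of_strictMonoOn_Iic_of_tendsto_atBot {α β : Type*} [LinearOrder α] [NoMinOrder α]
    [Preorder β] [TopologicalSpace β] [OrderClosedTopology β] {f : α → β} {a : β} {x : α}
    (hf : StrictMonoOn f (Iic x)) (hlim : Tendsto f atBot (𝓝 a)) : a < f x := by
  obtain ⟨y, hy⟩ := exists_lt x
  have : Nonempty α := ⟨x⟩
  have ha : a ≤ f y := le_of_tendsto hlim <| by
    filter_upwards [eventually_le_atBot y] with z hz
    exact hf.monotoneOn (hz.trans hy.le) hy.le hz
  exact ha.trans_lt (hf hy.le le_rfl hy)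

lemma pos_of_hasDerivAt_pos_of_tendsto_atBot {G g : ℝ → ℝ} (hG : ∀ x, HasDerivAt G (g x) x)
    (hg : ∀ x, 0 < g x) (hlim : Tendsto G atBot (𝓝 0)) (x : ℝ) : 0 < G x :=
  lt_of_strictMonoOn_Iic_of_tendsto_atBot
    ((strictMono_of_hasDerivAt_pos hG hg).strictMonoOn _) hlim

variable {F G f g : ℝ → ℝ} (hF : ∀ x, HasDerivAt F (f x) x) (hG : ∀ x, HasDerivAt G (g x) x)
  (hg : ∀ x, 0 < g x) (hF0 : Tendsto F atBot (𝓝 0)) (hG0 : Tendsto G atBot (𝓝 0))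
  (hfg : StrictAnti fun x => f x / g x)

include hF hG hg hF0 hG0 hfg

lemma deriv_mul_lt_mul_deriv_of_strictAnti_deriv_div (x : ℝ) : f x * G x < F x * g x := by
  set r := f x / g x with hr
  have hderiv : ∀ y, HasDerivAt (fun y => F y - r * G y) (f y - r * g y) y := fun y =>
    (hF y).sub ((hG y).const_mul r)
  have hmono : StrictMonoOn (fun y => F y - r * G y) (Iic x) := by
    refine strictMonoOn_of_hasDerivWithinAt_pos (convex_Iic x)
      (fun y _ => (hderiv y).continuousAt.continuousWithinAt)
      (fun y _ => (hderiv y).hasDerivWithinAt) fun y hy => ?_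
    rw [interior_Iic] at hy
    exact sub_pos.2 ((lt_div_iff₀ (hg y)).1 (hfg hy))
  have hlim : Tendsto (fun y => F y - r * G y) atBot (𝓝 0) := by
    simpa using hF0.sub (hG0.const_mul r)
  have hpos : r * G x < F x :=
    sub_pos.1 (lt_of_strictMonoOn_Iic_of_tendsto_atBot (f := fun y => F y - r * G y) hmono hlim)
  calc f x * G x = r * G x * g x := by rw [hr]; field_simp [(hg x).ne']
    _ < F x * g x := mul_lt_mul_of_pos_right hpos (hg x)

lemma strictAnti_div_of_strictAnti_deriv_div : StrictAnti fun x => F x / G x := by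
  have hGpos := pos_of_hasDerivAt_pos_of_tendsto_atBot hG hg hG0
  refine strictAnti_of_hasDerivAt_neg (fun x => (hF x).div (hG x) (hGpos x).ne') fun x => ?_
  exact div_neg_of_neg_of_pos
    (sub_neg.2 (deriv_mul_lt_mul_deriv_of_strictAnti_deriv_div hF hG hg hF0 hG0 hfg x))
    (pow_pos (hGpos x) 2)

end MonotoneLHopital

lemma strictMono_comp_sub_div_of_strictAnti_logDeriv {G g : ℝ → ℝ}
    (hG : ∀ x, HasDerivAt G (g x) x) (hpos : ∀ x, 0 < G x)
    (hlog : StrictAnti fun x => g x / G x) {d : ℝ} (hd : 0 < d) :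
    StrictMono fun x => G (x - d) / G x := by
  refine strictMono_of_hasDerivAt_pos
    (fun x => ((hG (x - d)).comp_sub_const x d).div (hG x) (hpos x).ne') fun x => ?_
  have hlt : g x / G x < g (x - d) / G (x - d) := hlog (sub_lt_self x hd)
  rw [div_lt_div_iff₀ (hpos _) (hpos _)] at hlt
  exact div_pos (by linarith) (pow_pos (hpos x) 2)

lemma normPDF_eq_gaussianPDFReal : normPDF = gaussianPDFReal 0 1 := by
  ext x
  simp [normPDF, gaussianPDFReal, div_eq_inv_mul]

lemma normPDF_pos (x : ℝ) : 0 < normPDF x := by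
  unfold normPDF
  positivity

lemma continuous_normPDF : Continuous normPDF := by
  unfold normPDF
  fun_prop

lemma integrable_normPDF : Integrable normPDF :=
  normPDF_eq_gaussianPDFReal ▸ integrable_gaussianPDFReal 0 1

lemma hasDerivAt_normPDF (x : ℝ) : HasDerivAt normPDF (-x * normPDF x) x := by
  have hexponent : HasDerivAt (fun y : ℝ => -y ^ 2 / 2) (-x) x :=
    ((hasDerivAt_pow 2 x).neg.div_const 2).congr_deriv (by norm_num; ring)
  refine (hexponent.exp.div_const (Real.sqrt (2 * Real.pi))).congr_deriv ?_
  unfold normPDF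
  ring

lemma tendsto_abs_rpow_mul_normPDF_atBot (s : ℝ) :
    Tendsto (fun x => |x| ^ s * normPDF x) atBot (𝓝 0) := by
  have h := ((tendsto_rpow_abs_mul_exp_neg_mul_sq_cocompact one_half_pos s).mono_left
    atBot_le_cocompact).div_const (Real.sqrt (2 * Real.pi))
  rw [zero_div] at h
  refine h.congr fun x => ?_
  rw [normPDF, mul_div_assoc, show -(1 / 2) * x ^ 2 = -x ^ 2 / 2 by ring]

lemma tendsto_normPDF_atBot : Tendsto normPDF atBot (𝓝 0) := by
  simpa using tendsto_abs_rpow_mul_normPDF_atBot 0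

lemma normCDF_eq_cdf (x : ℝ) : normCDF x = cdf (gaussianReal 0 1) x := by
  rw [cdf_eq_real, measureReal_def, gaussianReal_apply_eq_integral 0 one_ne_zero,
    ENNReal.toReal_ofReal (integral_nonneg fun y => gaussianPDFReal_nonneg 0 1 y),
    ← normPDF_eq_gaussianPDFReal, normCDF]

lemma tendsto_normCDF_atBot : Tendsto normCDF atBot (𝓝 0) :=
  (tendsto_cdf_atBot (gaussianReal 0 1)).congr fun x => (normCDF_eq_cdf x).symm

lemma hasDerivAt_normCDF (x : ℝ) : HasDerivAt normCDF (normPDF x) x := by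
  have heq : normCDF = fun y => normCDF 0 + ∫ t in (0 : ℝ)..y, normPDF t := by
    ext y
    rw [← intervalIntegral.integral_Iic_sub_Iic integrable_normPDF.integrableOn
      integrable_normPDF.integrableOn, normCDF, normCDF, add_sub_cancel]
  rw [heq]
  exact (continuous_normPDF.integral_hasStrictDerivAt 0 x).hasDerivAt.const_add _

lemma strictMono_normCDF : StrictMono normCDF :=
  strictMono_of_hasDerivAt_pos hasDerivAt_normCDF normPDF_pos

lemma normCDF_pos (x : ℝ) : 0 < normCDF x :=
  pos_of_hasDerivAt_pos_of_tendsto_atBot hasDerivAt_normCDF normPDF_pos tendsto_normCDF_atBot x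

lemma strictAnti_deriv_normPDF_div_normPDF : StrictAnti fun x => -x * normPDF x / normPDF x := by
  intro x y hxy
  simpa only [mul_div_cancel_right₀ _ (normPDF_pos _).ne'] using neg_lt_neg hxy

lemma strictAnti_normPDF_div_normCDF : StrictAnti fun x => normPDF x / normCDF x :=
  strictAnti_div_of_strictAnti_deriv_div hasDerivAt_normPDF hasDerivAt_normCDF normPDF_pos
    tendsto_normPDF_atBot tendsto_normCDF_atBot strictAnti_deriv_normPDF_div_normPDF

-- This is the Mills ratio bound `-x Φ(x) < φ(x)`.
lemma g1_pos (x : ℝ) : 0 < g1 x := by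
  have hmills : -x * normPDF x * normCDF x < normPDF x * normPDF x :=
    deriv_mul_lt_mul_deriv_of_strictAnti_deriv_div hasDerivAt_normPDF hasDerivAt_normCDF
      normPDF_pos tendsto_normPDF_atBot tendsto_normCDF_atBot
      strictAnti_deriv_normPDF_div_normPDF x
  refine (mul_pos_iff_of_pos_left (normPDF_pos x)).1 ?_
  unfold g1
  linarith

lemma hasDerivAt_g1 (x : ℝ) : HasDerivAt g1 (normCDF x) x :=
  (((hasDerivAt_id x).mul (hasDerivAt_normCDF x)).add (hasDerivAt_normPDF x)).congr_deriv (by simp)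

lemma strictMono_g1 : StrictMono g1 := strictMono_of_hasDerivAt_pos hasDerivAt_g1 normCDF_pos

lemma g1_le_normPDF {x : ℝ} (hx : x ≤ 0) : g1 x ≤ normPDF x :=
  add_le_of_nonpos_left (mul_nonpos_of_nonpos_of_nonneg hx (normCDF_pos x).le)

lemma tendsto_g1_atBot : Tendsto g1 atBot (𝓝 0) := by
  refine squeeze_zero' (.of_forall fun x => (g1_pos x).le) ?_ tendsto_normPDF_atBot
  filter_upwards [eventually_le_atBot 0] with x hx using g1_le_normPDF hx

lemma tendsto_g1_atTop : Tendsto g1 atTop atTop := by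
  refine tendsto_atTop_mono' atTop ?_ (tendsto_id.atTop_mul_const (normCDF_pos 0))
  filter_upwards [eventually_ge_atTop 0] with x hx
  calc x * normCDF 0 ≤ x * normCDF x :=
        mul_le_mul_of_nonneg_left (strictMono_normCDF.monotone hx) hx
    _ ≤ g1 x := le_add_of_nonneg_right (normPDF_pos x).le

lemma g1_g1inv {t : ℝ} (ht : 0 < t) : g1 (g1inv t) = t := by
  have hcont : Continuous g1 :=
    continuous_iff_continuousAt.2 fun x => (hasDerivAt_g1 x).continuousAt
  obtain ⟨a, ha⟩ := (tendsto_g1_atBot.eventually (gt_mem_nhds ht)).exists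
  obtain ⟨b, hb⟩ := (tendsto_g1_atTop.eventually (eventually_ge_atTop t)).exists
  exact Function.invFun_eq (mem_range_of_exists_le_of_exists_ge hcont ⟨a, ha.le⟩ ⟨b, hb⟩)

lemma strictAnti_normCDF_div_g1 : StrictAnti fun x => normCDF x / g1 x :=
  strictAnti_div_of_strictAnti_deriv_div hasDerivAt_normCDF hasDerivAt_g1 normCDF_pos
    tendsto_normCDF_atBot tendsto_g1_atBot strictAnti_normPDF_div_normCDF

lemma sub_lt_sub_of_g1_div_eq {u v u' v' : ℝ} (hvu : v < u) (hu : u' < u)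
    (hratio : g1 v / g1 u = g1 v' / g1 u') : u' - v' < u - v := by
  have hshift : g1 (u' - (u - v)) / g1 u' < g1 (u - (u - v)) / g1 u :=
    strictMono_comp_sub_div_of_strictAnti_logDeriv hasDerivAt_g1 g1_pos
      strictAnti_normCDF_div_g1 (sub_pos.2 hvu) hu
  rw [sub_sub_cancel, hratio, div_lt_div_iff_of_pos_right (g1_pos u'),
    strictMono_g1.lt_iff_lt] at hshift
  linarith

lemma g2_eq (x : ℝ) : g2 x = x * g1 x + normCDF x := by
  unfold g2 g1
  ring

lemma hasDerivAt_g2 (x : ℝ) : HasDerivAt g2 (2 * g1 x) x := by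
  rw [funext g2_eq]
  refine (((hasDerivAt_id x).mul (hasDerivAt_g1 x)).add (hasDerivAt_normCDF x)).congr_deriv ?_
  simp only [id, g1]
  ring

lemma two_mul_g1_pos (x : ℝ) : 0 < 2 * g1 x := mul_pos two_pos (g1_pos x)

lemma tendsto_g2_atBot : Tendsto g2 atBot (𝓝 0) := by
  have hmul : Tendsto (fun x => x * g1 x) atBot (𝓝 0) := by
    refine squeeze_zero_norm' ?_ (tendsto_abs_rpow_mul_normPDF_atBot 1)
    filter_upwards [eventually_le_atBot 0] with x hx
    rw [Real.norm_eq_abs, abs_mul, abs_of_pos (g1_pos x), Real.rpow_one]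
    exact mul_le_mul_of_nonneg_left (g1_le_normPDF hx) (abs_nonneg x)
  simpa only [← g2_eq, add_zero] using hmul.add tendsto_normCDF_atBot

lemma strictMono_g2 : StrictMono g2 := strictMono_of_hasDerivAt_pos hasDerivAt_g2 two_mul_g1_pos

lemma g2_pos (x : ℝ) : 0 < g2 x :=
  pos_of_hasDerivAt_pos_of_tendsto_atBot hasDerivAt_g2 two_mul_g1_pos tendsto_g2_atBot x

-- This is strict log-concavity of `g₂`, as `g₂' = 2 g₁` and `g₂'' = 2 Φ`.
lemma normCDF_mul_g2_lt (x : ℝ) : normCDF x * g2 x < g1 x * (2 * g1 x) := by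
  refine deriv_mul_lt_mul_deriv_of_strictAnti_deriv_div hasDerivAt_g1 hasDerivAt_g2
    two_mul_g1_pos tendsto_g1_atBot tendsto_g2_atBot (fun x y hxy => ?_) x
  simp only [mul_comm (2 : ℝ), ← div_div]
  exact div_lt_div_of_pos_right (strictAnti_normCDF_div_g1 hxy) two_pos

lemma strictMono_mul_g2_add_div_g1_add {b c : ℝ} (hb : 0 < b) (hc : 0 < c) :
    StrictMono fun x => (b * g2 x + g1 x * c) / (g1 x + b) := by
  refine strictMono_of_hasDerivAt_pos (fun x =>
    (((hasDerivAt_g2 x).const_mul b).add ((hasDerivAt_g1 x).mul_const c)).div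
      ((hasDerivAt_g1 x).add_const b) (add_pos (g1_pos x) hb).ne') fun x => ?_
  have hg1 := g1_pos x
  have hΦ := normCDF_pos x
  have hgap := sub_pos.2 (normCDF_mul_g2_lt x)
  refine div_pos ?_ (by positivity)
  calc 0 < b * ((g1 x * (2 * g1 x) - normCDF x * g2 x) + 2 * b * g1 x + c * normCDF x) := by
        positivity
    _ = (b * (2 * g1 x) + normCDF x * c) * (g1 x + b) -
          (b * g2 x + g1 x * c) * normCDF x := by ring

/-- The left side of the normalization in `IsThresholdPair` after eliminating the class probability
`p = g₁(v) / (g₁(u) + g₁(v))`, which makes it symmetric in the two thresholds. -/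
noncomputable def pooledConstraint (m δ u v : ℝ) : ℝ :=
  δ * ((g1 v * g2 u + g1 u * g2 v) / (g1 u + g1 v)) +
    (2 * m * δ * (g1 u * g1 v / (g1 u + g1 v))) ^ 2

lemma pooledConstraint_comm (m δ u v : ℝ) :
    pooledConstraint m δ u v = pooledConstraint m δ v u := by
  simp only [pooledConstraint, add_comm, mul_comm]

section

variable {m δ : ℝ} (hm : 0 < m) (hδ : 0 < δ)

include hm hδ

lemma strictMono_pooledConstraint_left (v : ℝ) :
    StrictMono fun u => pooledConstraint m δ u v := by
  intro x y hxy
  have hx := g1_pos x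
  have hy := g1_pos y
  have hv := g1_pos v
  have hquadratic := strictMono_mul_g2_add_div_g1_add hv (g2_pos v) hxy
  have hharmonic : g1 x * g1 v / (g1 x + g1 v) ≤ g1 y * g1 v / (g1 y + g1 v) := by
    rw [div_le_div_iff₀ (by positivity) (by positivity)]
    nlinarith [mul_pos hv hv, strictMono_g1 hxy]
  unfold pooledConstraint
  refine add_lt_add_of_lt_of_le (mul_lt_mul_of_pos_left hquadratic hδ) ?_
  gcongr

lemma le_of_pooledConstraint_eq {u v u' v' : ℝ}
    (h : pooledConstraint m δ u v = pooledConstraint m δ u' v') (hu : u ≤ u') : v' ≤ v := by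
  by_contra! hv
  refine h.not_lt ?_
  calc pooledConstraint m δ u v ≤ pooledConstraint m δ u' v :=
        (strictMono_pooledConstraint_left hm hδ v).monotone hu
    _ = pooledConstraint m δ v u' := pooledConstraint_comm ..
    _ < pooledConstraint m δ v' u' := strictMono_pooledConstraint_left hm hδ u' hv
    _ = pooledConstraint m δ u' v' := pooledConstraint_comm ..

end

/-- The equations satisfied by the class thresholds `u = g₁⁻¹(ρ/(2pmδ))` and
`v = g₁⁻¹(ρ/(2(1-p)mδ))`, stated without `ρ`, which is recovered as `2mδ·p·g₁(u)`. -/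
structure IsThresholdPair (p m δ u v : ℝ) : Prop where
  balance : p * g1 u = (1 - p) * g1 v
  normalization : p * δ * g2 u + (1 - p) * δ * g2 v + (2 * m * δ * (p * g1 u)) ^ 2 = 1

lemma isThresholdPair_g1inv {p m δ ρ : ℝ} (hp : p ∈ Ioo (0 : ℝ) 1) (hm : 0 < m) (hδ : 0 < δ)
    (hρ : 0 < ρ)
    (h : p * δ * gfn (ρ / (2 * p * m * δ)) + (1 - p) * δ * gfn (ρ / (2 * (1 - p) * m * δ)) =
      1 - ρ ^ 2) :
    IsThresholdPair p m δ (g1inv (ρ / (2 * p * m * δ))) (g1inv (ρ / (2 * (1 - p) * m * δ))) := by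
  obtain ⟨hp0, hp1⟩ := hp
  have : 0 < 1 - p := sub_pos.2 hp1
  have hu : g1 (g1inv (ρ / (2 * p * m * δ))) = ρ / (2 * p * m * δ) := g1_g1inv (by positivity)
  have hv : g1 (g1inv (ρ / (2 * (1 - p) * m * δ))) = ρ / (2 * (1 - p) * m * δ) :=
    g1_g1inv (by positivity)
  have hρu : 2 * m * δ * (p * (ρ / (2 * p * m * δ))) = ρ := by field_simp
  refine ⟨?_, ?_⟩
  · rw [hu, hv]
    field_simp
  · rw [hu, hρu]
    unfold gfn at h
    linarith

namespace IsThresholdPair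

variable {p p' m m' δ δ' u v u' v' : ℝ}

lemma prob_eq (h : IsThresholdPair p m δ u v) : p = g1 v / (g1 u + g1 v) := by
  rw [eq_div_iff (add_pos (g1_pos u) (g1_pos v)).ne']
  linarith [h.balance]

lemma prob_mem_Ioo (h : IsThresholdPair p m δ u v) : p ∈ Ioo (0 : ℝ) 1 := by
  have hu := g1_pos u
  have hv := g1_pos v
  rw [h.prob_eq]
  exact ⟨by positivity, (div_lt_one (by positivity)).2 (by linarith)⟩

lemma g1_div_g1 (h : IsThresholdPair p m δ u v) : g1 v / g1 u = p / (1 - p) := by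
  rw [div_eq_div_iff (g1_pos u).ne' (sub_pos.2 h.prob_mem_Ioo.2).ne']
  linarith [h.balance]

lemma lt_of_prob_lt_half (h : IsThresholdPair p m δ u v) (hp : p < 1 / 2) : v < u := by
  rw [← strictMono_g1.lt_iff_lt]
  nlinarith [h.balance, g1_pos u]

lemma pooledConstraint_eq_one (h : IsThresholdPair p m δ u v) : pooledConstraint m δ u v = 1 := by
  have hsum : g1 u + g1 v ≠ 0 := (add_pos (g1_pos u) (g1_pos v)).ne'
  rw [← h.normalization, h.prob_eq, pooledConstraint]
  field_simp
  ring

lemma lt_and_le_of_prob_lt (h : IsThresholdPair p m δ u v) (h' : IsThresholdPair p' m δ u' v')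
    (hm : 0 < m) (hδ : 0 < δ) (hp : p < p') : u' < u ∧ v ≤ v' := by
  have heq : pooledConstraint m δ u v = pooledConstraint m δ u' v' :=
    h.pooledConstraint_eq_one.trans h'.pooledConstraint_eq_one.symm
  have hu : u' < u := by
    by_contra! hle
    have hv : v' ≤ v := le_of_pooledConstraint_eq hm hδ heq hle
    have hp0 : 0 ≤ p := h.prob_mem_Ioo.1.le
    have hq' : 0 ≤ 1 - p' := (sub_pos.2 h'.prob_mem_Ioo.2).le
    refine h'.balance.not_gt ?_
    calc (1 - p') * g1 v' ≤ (1 - p') * g1 v :=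
          mul_le_mul_of_nonneg_left (strictMono_g1.monotone hv) hq'
      _ < (1 - p) * g1 v := mul_lt_mul_of_pos_right (sub_lt_sub_left hp 1) (g1_pos v)
      _ = p * g1 u := h.balance.symm
      _ ≤ p * g1 u' := mul_le_mul_of_nonneg_left (strictMono_g1.monotone hle) hp0
      _ ≤ p' * g1 u' := mul_le_mul_of_nonneg_right hp.le (g1_pos u').le
  exact ⟨hu, le_of_pooledConstraint_eq hm hδ heq.symm hu.le⟩

lemma lt_of_mul_lt_mul (h : IsThresholdPair p m δ u v) (h' : IsThresholdPair p m' δ' u' v')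
    (hm : 0 < m) (hδ : 0 < δ) (hδδ' : δ ≤ δ') (hmδ : m * δ < m' * δ') : u' < u := by
  by_contra! hu
  obtain ⟨hp, hp1⟩ := h.prob_mem_Ioo
  have hq : 0 < 1 - p := sub_pos.2 hp1
  have hg1 : g1 u ≤ g1 u' := strictMono_g1.monotone hu
  have hv : v ≤ v' := by
    rw [← strictMono_g1.le_iff_le, ← mul_le_mul_iff_right₀ hq, ← h.balance, ← h'.balance]
    gcongr
  have hu2 := g2_pos u
  have hv2 := g2_pos v
  have hu1 := g1_pos u
  have hδ' : 0 < δ' := hδ.trans_le hδδ'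
  refine (h.normalization.trans h'.normalization.symm).not_lt ?_
  have hminority : p * δ * g2 u ≤ p * δ' * g2 u' := by
    gcongr
    exact strictMono_g2.monotone hu
  have hmajority : (1 - p) * δ * g2 v ≤ (1 - p) * δ' * g2 v' := by
    gcongr
    exact strictMono_g2.monotone hv
  have hroot : 2 * m * δ * (p * g1 u) < 2 * m' * δ' * (p * g1 u') := by
    calc 2 * m * δ * (p * g1 u) = 2 * (m * δ) * (p * g1 u) := by ring
      _ < 2 * (m' * δ') * (p * g1 u) := by gcongr
      _ ≤ 2 * (m' * δ') * (p * g1 u') := by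
        have := (mul_pos hm hδ).trans hmδ
        gcongr
      _ = 2 * m' * δ' * (p * g1 u') := by ring
  have hsq := pow_lt_pow_left₀ hroot (by positivity) two_ne_zero
  linarith

lemma sub_lt_sub_of_mul_lt_mul (h : IsThresholdPair p m δ u v)
    (h' : IsThresholdPair p m' δ' u' v') (hp : p < 1 / 2) (hm : 0 < m) (hδ : 0 < δ)
    (hδδ' : δ ≤ δ') (hmδ : m * δ < m' * δ') : u' - v' < u - v :=
  sub_lt_sub_of_g1_div_eq (h.lt_of_prob_lt_half hp) (h.lt_of_mul_lt_mul h' hm hδ hδδ' hmδ)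
    (h.g1_div_g1.trans h'.g1_div_g1.symm)

end IsThresholdPair

theorem stmt_13_general (ρstar : ℝ → ℝ → ℝ → ℝ)
    (hρstar : ∀ p m δ : ℝ, p ∈ Set.Ioo (0 : ℝ) 1 → 0 < m → 0 < δ →
      ρstar p m δ ∈ Set.Ioo (0 : ℝ) 1 ∧
      p * δ * gfn (ρstar p m δ / (2 * p * m * δ)) +
          (1 - p) * δ * gfn (ρstar p m δ / (2 * (1 - p) * m * δ)) =
        1 - (ρstar p m δ) ^ 2)
    (β0star : ℝ → ℝ → ℝ → ℝ)
    (hβ0star : ∀ p m δ : ℝ, β0star p m δ =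
      (1 / 2) * (g1inv (ρstar p m δ / (2 * (1 - p) * m * δ)) -
        g1inv (ρstar p m δ / (2 * p * m * δ)))) :
    (∀ p m δ : ℝ, p ∈ Set.Ioo (0 : ℝ) (1 / 2) → 0 < m → 0 < δ → β0star p m δ < 0) ∧
    (∀ m δ : ℝ, 0 < m → 0 < δ →
      StrictMonoOn (fun p => β0star p m δ) (Set.Ioo 0 1)) ∧
    (∀ p δ : ℝ, p ∈ Set.Ioo (0 : ℝ) (1 / 2) → 0 < δ →
      StrictMonoOn (fun m => β0star p m δ) (Set.Ioi 0)) ∧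
    (∀ p m : ℝ, p ∈ Set.Ioo (0 : ℝ) (1 / 2) → 0 < m →
      StrictMonoOn (fun δ => β0star p m δ) (Set.Ioi 0)) := by
  have hpair : ∀ {p m δ : ℝ}, p ∈ Ioo (0 : ℝ) 1 → 0 < m → 0 < δ →
      IsThresholdPair p m δ (g1inv (ρstar p m δ / (2 * p * m * δ)))
        (g1inv (ρstar p m δ / (2 * (1 - p) * m * δ))) := fun hp hm hδ =>
    isThresholdPair_g1inv hp hm hδ (hρstar _ _ _ hp hm hδ).1.1 (hρstar _ _ _ hp hm hδ).2
  have hhalf : Ioo (0 : ℝ) (1 / 2) ⊆ Ioo 0 1 := Ioo_subset_Ioo_right one_half_lt_one.le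
  refine ⟨fun p m δ hp hm hδ => ?_, fun m δ hm hδ p hp p' hp' hpp' => ?_,
    fun p δ hp hδ m (hm : 0 < m) m' (hm' : 0 < m') hmm' => ?_,
    fun p m hp hm δ (hδ : 0 < δ) δ' (hδ' : 0 < δ') hδδ' => ?_⟩ <;> simp only [hβ0star]
  · linarith [(hpair (hhalf hp) hm hδ).lt_of_prob_lt_half hp.2]
  · obtain ⟨hu, hv⟩ := (hpair hp hm hδ).lt_and_le_of_prob_lt (hpair hp' hm hδ) hm hδ hpp'
    linarith
  · linarith [(hpair (hhalf hp) hm hδ).sub_lt_sub_of_mul_lt_mul (hpair (hhalf hp) hm' hδ)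
      hp.2 hm hδ le_rfl (mul_lt_mul_of_pos_right hmm' hδ)]
  · linarith [(hpair (hhalf hp) hm hδ).sub_lt_sub_of_mul_lt_mul (hpair (hhalf hp) hm hδ')
      hp.2 hm hδ hδδ'.le (mul_lt_mul_of_pos_left hδδ' hm)]

/-- The limiting intercept `β₀*(π, m, δ)` of the unrebalanced
max-margin classifier is negative and strictly increasing in each of `π`
(on `(0,1/2)`), `m`, and `δ`. -/
theorem stmt_13 (ρstar : ℝ → ℝ → ℝ → ℝ)
    (hρstar : ∀ p m δ : ℝ, p ∈ Set.Ioo (0 : ℝ) 1 → 0 < m → 0 < δ →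
      ρstar p m δ ∈ Set.Ioo (0 : ℝ) 1 ∧
      p * δ * gfn (ρstar p m δ / (2 * p * m * δ)) +
          (1 - p) * δ * gfn (ρstar p m δ / (2 * (1 - p) * m * δ)) =
        1 - (ρstar p m δ) ^ 2)
    (β0star : ℝ → ℝ → ℝ → ℝ)
    (hβ0star : ∀ p m δ : ℝ, β0star p m δ =
      (1 / 2) * (g1inv (ρstar p m δ / (2 * (1 - p) * m * δ)) -
        g1inv (ρstar p m δ / (2 * p * m * δ)))) :
    (∀ p m δ : ℝ, p ∈ Set.Ioo (0 : ℝ) (1 / 2) → 0 < m → 0 < δ → β0star p m δ < 0) ∧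
    (∀ m δ : ℝ, 0 < m → 0 < δ →
      StrictMonoOn (fun p => β0star p m δ) (Set.Ioo 0 (1 / 2))) ∧
    (∀ p δ : ℝ, p ∈ Set.Ioo (0 : ℝ) (1 / 2) → 0 < δ →
      StrictMonoOn (fun m => β0star p m δ) (Set.Ioi 0)) ∧
    (∀ p m : ℝ, p ∈ Set.Ioo (0 : ℝ) (1 / 2) → 0 < m →
      StrictMonoOn (fun δ => β0star p m δ) (Set.Ioi 0)) := by
  obtain ⟨hneg, hprob, hrest⟩ := stmt_13_general ρstar hρstar β0star hβ0star
  exact ⟨hneg, fun m δ hm hδ =>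
    (hprob m δ hm hδ).mono (Ioo_subset_Ioo_right one_half_lt_one.le), hrest⟩
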